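/- arXiv:1812.07785 — 3 statements merged into one kernel-verified Lean document; each statement's English description precedes it below -/
import Mathlib

section
/- Let ω = (q_n)_{n≥1} be a sequence with δ-lower bound (q_n ≥ δ > 0 for all n) and 0 < q_n < 1. Then for every k ≥ 0 and any two distinct strings s, t ∈ {0,1}^{k+1}, the distance between the intervals I_{k+1}(s) and I_{k+1}(t) is at least 2δ·ℓ_{k+1}; equivalently, every connected component of [0,1] ∖ E_{k+1}(ω) has length at least 2δ·ℓ_{k+1}. -/
open Set Filter

/-- `ℓ_k = 2^{-k} ∏_{j=1}^k (1 - q_j)` (here `q` is 0-indexed: `q 0` is `q_1`). -/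
noncomputable def cantorLen (q : ℕ → ℝ) (k : ℕ) : ℝ :=
  (∏ j ∈ Finset.range k, (1 - q j)) / 2 ^ k

/-- Left endpoint `a_k(s) = ∑_{j=1}^k s_j (ℓ_{j-1} - ℓ_j)` of the interval `I_k(s)`. -/
noncomputable def cantorPt (q : ℕ → ℝ) {k : ℕ} (s : Fin k → Bool) : ℝ :=
  ∑ j : Fin k, if s j then cantorLen q j - cantorLen q (j + 1) else 0

/-- The level-`k` closed interval `I_k(s) = [a_k(s), a_k(s) + ℓ_k]`. -/
noncomputable def cantorInterval (q : ℕ → ℝ) {k : ℕ} (s : Fin k → Bool) : Set ℝ :=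
  Icc (cantorPt q s) (cantorPt q s + cantorLen q k)

/-- The level-`k` set `E_k(ω) = ⋃_{s ∈ {0,1}^k} I_k(s)`. -/
noncomputable def cantorLevel (q : ℕ → ℝ) (k : ℕ) : Set ℝ :=
  ⋃ s : Fin k → Bool, cantorInterval q s

/-- The random Cantor set `E(ω) = ⋂_k E_k(ω)`. -/
noncomputable def randomCantorSet (q : ℕ → ℝ) : Set ℝ :=
  ⋂ k : ℕ, cantorLevel q k

/-!
Passing from level `k` to level `k + 1` replaces `I_k(s)` by two subintervals at its ends, leaving
a gap of length `ℓ_k - 2 ℓ_{k+1} = q_{k+1} ℓ_k` between them. If `s` and `t` first differ in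
position `j + 1`, then `I(s)` and `I(t)` lie on opposite sides of the gap in their common ancestor
of level `j`, whose length `q_{j+1} ℓ_j` is at least `δ ℓ_j ≥ 2 δ ℓ_{j+1} ≥ 2 δ ℓ_{k+1}`.
-/

section

variable {q : ℕ → ℝ} {k : ℕ}

lemma cantorLen_nonneg (hq : ∀ n, q n ≤ 1) (k : ℕ) : 0 ≤ cantorLen q k :=
  div_nonneg (Finset.prod_nonneg fun j _ => sub_nonneg.2 (hq j)) (by positivity)

lemma two_mul_cantorLen_succ (q : ℕ → ℝ) (k : ℕ) :
    2 * cantorLen q (k + 1) = (1 - q k) * cantorLen q k := by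
  rw [cantorLen, cantorLen, Finset.prod_range_succ, pow_succ]
  field_simp

lemma two_mul_cantorLen_succ_le (hq : ∀ n, q n ≤ 1) (hqk : 0 ≤ q k) :
    2 * cantorLen q (k + 1) ≤ cantorLen q k := by
  rw [two_mul_cantorLen_succ]
  exact mul_le_of_le_one_left (cantorLen_nonneg hq k) (sub_le_self 1 hqk)

lemma cantorLen_antitone (hq₀ : ∀ n, 0 ≤ q n) (hq₁ : ∀ n, q n ≤ 1) : Antitone (cantorLen q) :=
  antitone_nat_of_succ_le fun k => by
    linarith [two_mul_cantorLen_succ_le hq₁ (hq₀ k), cantorLen_nonneg hq₁ (k + 1)]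

lemma cantorPt_succ (q : ℕ → ℝ) (s : Fin (k + 1) → Bool) :
    cantorPt q s = cantorPt q (Fin.init s) +
      if s (Fin.last k) then cantorLen q k - cantorLen q (k + 1) else 0 :=
  Fin.sum_univ_castSucc _

lemma cantorInterval_subset_init (hlen : cantorLen q (k + 1) ≤ cantorLen q k)
    (s : Fin (k + 1) → Bool) :
    cantorInterval q s ⊆ cantorInterval q (Fin.init s) := by
  apply Icc_subset_Icc <;> rw [cantorPt_succ] <;> split_ifs <;> linarith

lemma gap_le_sub_of_init_eq {s t : Fin (k + 1) → Bool} {x y : ℝ}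
    (hinit : Fin.init s = Fin.init t) (hs : s (Fin.last k) = false) (ht : t (Fin.last k) = true)
    (hx : x ∈ cantorInterval q s) (hy : y ∈ cantorInterval q t) :
    q k * cantorLen q k ≤ y - x := by
  have hx_le : x ≤ cantorPt q (Fin.init t) + cantorLen q (k + 1) := by
    simpa [cantorPt_succ, hs, hinit] using hx.2
  have hle_y : cantorPt q (Fin.init t) + (cantorLen q k - cantorLen q (k + 1)) ≤ y := by
    simpa [cantorPt_succ, ht] using hy.1
  linarith [two_mul_cantorLen_succ q k]

lemma gap_le_sub_of_first_difference (hanti : Antitone (cantorLen q)) {s t : Fin k → Bool}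
    {j : Fin k} (hagree : ∀ i < j, s i = t i) (hs : s j = false) (ht : t j = true) {x y : ℝ}
    (hx : x ∈ cantorInterval q s) (hy : y ∈ cantorInterval q t) :
    q j * cantorLen q j ≤ y - x := by
  induction k with
  | zero => exact j.elim0
  | succ k ih =>
    cases j using Fin.lastCases with
    | last =>
      have hinit : Fin.init s = Fin.init t := funext fun i => hagree _ i.castSucc_lt_last
      exact gap_le_sub_of_init_eq hinit hs ht hx hy
    | cast j =>
      have hlen : cantorLen q (k + 1) ≤ cantorLen q k := hanti k.le_succ
      exact ih (fun i hi => hagree _ (Fin.castSucc_lt_castSucc_iff.2 hi)) hs ht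
        (cantorInterval_subset_init hlen s hx) (cantorInterval_subset_init hlen t hy)

end

/-- If ω has δ-lower bound (q_n ≥ δ > 0), then for every k ≥ 0 and any two
distinct strings s, t ∈ {0,1}^{k+1}, the distance between the intervals I_{k+1}(s) and
I_{k+1}(t) is at least 2δ·ℓ_{k+1}. -/
theorem cantorIntervals_gap_of_lowerBound
    (q : ℕ → ℝ) (δ : ℝ) (hδ : 0 < δ) (hq : ∀ n, δ ≤ q n ∧ q n < 1) (k : ℕ)
    (s t : Fin (k + 1) → Bool) (hst : s ≠ t) :
    ∀ x ∈ cantorInterval q s, ∀ y ∈ cantorInterval q t,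
      2 * δ * cantorLen q (k + 1) ≤ |x - y| := by
  intro x hx y hy
  wlog hlt : toLex s < toLex t generalizing s t x y
  · rw [abs_sub_comm]
    exact this t s hst.symm y hy x hx (lt_of_le_of_ne (not_lt.1 hlt) hst.symm)
  obtain ⟨j, hagree, hj⟩ := hlt
  obtain ⟨hs, ht⟩ := Bool.lt_iff.1 hj
  have hq₀ : ∀ n, 0 ≤ q n := fun n => hδ.le.trans (hq n).1
  have hq₁ : ∀ n, q n ≤ 1 := fun n => (hq n).2.le
  have hanti : Antitone (cantorLen q) := cantorLen_antitone hq₀ hq₁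
  calc
    2 * δ * cantorLen q (k + 1) ≤ 2 * δ * cantorLen q (j + 1) := by
      gcongr
      exact hanti j.isLt
    _ = δ * (2 * cantorLen q (j + 1)) := by ring
    _ ≤ δ * cantorLen q j := by
      gcongr
      exact two_mul_cantorLen_succ_le hq₁ (hq₀ j)
    _ ≤ q j * cantorLen q j := mul_le_mul_of_nonneg_right (hq j).1 (cantorLen_nonneg hq₁ j)
    _ ≤ y - x := gap_le_sub_of_first_difference hanti hagree hs ht hx hy
    _ ≤ |x - y| := (le_abs_self (y - x)).trans_eq (abs_sub_comm y x)
end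

section
/- Let ω = (q_n)_{n≥1} be a sequence with δ-lower bound (q_n ≥ δ > 0 for all n) and 0 < q_n < 1. For k ≥ 1 and s ∈ {0,1}^k, let D_k(s) ⊂ ℂ be the closed disk centered at the real point a_k(s) + ℓ_k/2 with radius (1/2)(1+δ)ℓ_k, and let C_k(s) = ∂D_k(s) be its boundary circle. Then: (i) for each fixed k, the disks D_k(s), s ∈ {0,1}^k, are pairwise disjoint; (ii) for each s ∈ {0,1}^k and i ∈ {0,1}, D_{k+1}(s⌢i) is contained in the open disk interior of D_k(s); consequently the circles C_k(s), taken over all k ≥ 1 and all s ∈ {0,1}^k, are pairwise disjoint, and each circle C_k(s) is disjoint from E(ω). -/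
open Set Filter

/-- The closed disk D_k(s) ⊂ ℂ centered at the real midpoint of I_k(s) with radius
(1/2)(1+δ)ℓ_k. -/
noncomputable def cantorDisk (q : ℕ → ℝ) (δ : ℝ) {k : ℕ} (s : Fin k → Bool) : Set ℂ :=
  Metric.closedBall ((cantorPt q s + cantorLen q k / 2 : ℝ) : ℂ) ((1 + δ) / 2 * cantorLen q k)

/-- The boundary circle C_k(s) = ∂D_k(s). -/
noncomputable def cantorCircle (q : ℕ → ℝ) (δ : ℝ) {k : ℕ} (s : Fin k → Bool) : Set ℂ :=
  Metric.sphere ((cantorPt q s + cantorLen q k / 2 : ℝ) : ℂ) ((1 + δ) / 2 * cantorLen q k)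

/-!
The length recursion gives `(2 + δ) ℓ_{k+1} < ℓ_k` as soon as `q_k > δ / (2 + δ)`. The two children
of `D_k(s)` have centers at distance `ℓ_k - ℓ_{k+1}` from each other, which exceeds the sum
`(1 + δ) ℓ_{k+1}` of their radii, and at distance `(ℓ_k - ℓ_{k+1}) / 2` from the center of `D_k(s)`,
which is less than the difference `(1 + δ) (ℓ_k - ℓ_{k+1}) / 2` of the radii. So the disks form a
tree with disjoint siblings, each lying strictly inside its parent. Two circles of this tree on
different levels are disjoint because the deeper one lies inside a child of some disk on the level
of the other. Since `I_{k+1}(t) ⊆ D_{k+1}(t)`, the set `E(ω)` is covered by the disks of level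
`k + 1`, which all miss the circles of level `k`.
-/

section WordFamily

open Function

variable {α β : Type*} [PartialOrder β] {C D : ∀ ⦃k : ℕ⦄, (Fin k → α) → β}

theorem le_take_of_snoc_le
    (hsnoc : ∀ (k : ℕ) (s : Fin k → α) (i : α), D (Fin.snoc s i : Fin (k + 1) → α) ≤ D s)
    {k l : ℕ} (hkl : k ≤ l) (s : Fin l → α) : D s ≤ D (Fin.take k hkl s) := by
  induction l, hkl using Nat.le_induction with
  | base => rw [Fin.take_eq_self]
  | succ l hkl ih =>
    calc D s = D (Fin.snoc (Fin.init s) (s (Fin.last l)) : Fin (l + 1) → α) := by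
          rw [Fin.snoc_init_self]
      _ ≤ D (Fin.init s) := hsnoc l _ _
      _ ≤ D (Fin.take k _ s) := by simpa only [Fin.take_init] using ih (Fin.init s)

variable [OrderBot β]

theorem pairwise_disjoint_of_snoc
    (hsnoc : ∀ (k : ℕ) (s : Fin k → α) (i : α), D (Fin.snoc s i : Fin (k + 1) → α) ≤ D s)
    (hsib : ∀ (k : ℕ) (s : Fin k → α),
      Pairwise (Disjoint on fun i ↦ D (Fin.snoc s i : Fin (k + 1) → α)))
    (k : ℕ) : Pairwise (Disjoint on @D k) := by
  induction k with
  | zero => exact fun s t hst ↦ absurd (Subsingleton.elim s t) hst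
  | succ k ih =>
    intro s t hst
    induction s using Fin.snocCases with | snoc s i => ?_
    induction t using Fin.snocCases with | snoc t j => ?_
    rcases eq_or_ne s t with rfl | hne
    · exact hsib k s fun hij ↦ hst (by rw [hij])
    · exact (ih hne).mono (hsnoc k s i) (hsnoc k t j)

theorem disjoint_of_lt_of_snoc
    (hsnoc : ∀ (k : ℕ) (s : Fin k → α) (i : α), D (Fin.snoc s i : Fin (k + 1) → α) ≤ D s)
    (hD : ∀ k, Pairwise (Disjoint on @D k))
    (hCD : ∀ (k : ℕ) (s : Fin k → α), C s ≤ D s)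
    (hC : ∀ (k : ℕ) (s : Fin k → α) (i : α), Disjoint (C s) (D (Fin.snoc s i : Fin (k + 1) → α)))
    {k l : ℕ} (hkl : k < l) (s : Fin k → α) (t : Fin l → α) : Disjoint (C s) (D t) := by
  refine Disjoint.mono_right (le_take_of_snoc_le hsnoc hkl t) ?_
  induction Fin.take (k + 1) hkl t using Fin.snocCases with | snoc u i => ?_
  rcases eq_or_ne s u with rfl | hne
  · exact hC k s i
  · exact (hD k hne).mono (hCD k s) (hsnoc k u i)

theorem pairwise_disjoint_sigma_of_lt
    (hD : ∀ k, Pairwise (Disjoint on @D k))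
    (hCD : ∀ (k : ℕ) (s : Fin k → α), C s ≤ D s)
    (hlt : ∀ ⦃k l : ℕ⦄, k < l → ∀ (s : Fin k → α) (t : Fin l → α), Disjoint (C s) (D t)) :
    Pairwise (Disjoint on fun p : Σ k : ℕ, Fin k → α ↦ C p.2) := by
  rintro ⟨k, s⟩ ⟨l, t⟩ hne
  rcases lt_trichotomy k l with hkl | rfl | hlk
  · exact (hlt hkl s t).mono_right (hCD l t)
  · have hst : s ≠ t := fun h ↦ hne (by rw [h])
    exact (hD k hst).mono (hCD k s) (hCD k t)
  · exact ((hlt hlk t s).mono_right (hCD k s)).symm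

end WordFamily

section CantorDisk

open Function

variable {q : ℕ → ℝ} {δ : ℝ} {k : ℕ}

theorem cantorLen_pos (hq : ∀ n, q n < 1) (k : ℕ) : 0 < cantorLen q k :=
  div_pos (Finset.prod_pos fun j _ ↦ sub_pos.2 (hq j)) (by positivity)

theorem cantorLen_succ (q : ℕ → ℝ) (k : ℕ) :
    cantorLen q (k + 1) = (1 - q k) / 2 * cantorLen q k := by
  rw [cantorLen, cantorLen, Finset.prod_range_succ, pow_succ]
  ring

theorem cantorPt_snoc (q : ℕ → ℝ) (s : Fin k → Bool) (i : Bool) :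
    cantorPt q (Fin.snoc s i : Fin (k + 1) → Bool) =
      cantorPt q s + if i then cantorLen q k - cantorLen q (k + 1) else 0 := by
  simp [cantorPt, Fin.sum_univ_castSucc]

theorem two_add_mul_cantorLen_succ_lt (hδ : 0 < 2 + δ) (hlen : 0 < cantorLen q k)
    (hq : δ / (2 + δ) < q k) : (2 + δ) * cantorLen q (k + 1) < cantorLen q k := by
  have hfactor : (2 + δ) * (1 - q k) / 2 < 1 := by
    rw [div_lt_iff₀ hδ] at hq
    linarith
  calc (2 + δ) * cantorLen q (k + 1)
      = (2 + δ) * (1 - q k) / 2 * cantorLen q k := by rw [cantorLen_succ]; ring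
    _ < 1 * cantorLen q k := by gcongr
    _ = cantorLen q k := one_mul _

theorem cantorDisk_snoc_subset_ball (hδ : 0 < δ) (hlen : cantorLen q (k + 1) < cantorLen q k)
    (s : Fin k → Bool) (i : Bool) :
    cantorDisk q δ (Fin.snoc s i : Fin (k + 1) → Bool) ⊆
      Metric.ball ((cantorPt q s + cantorLen q k / 2 : ℝ) : ℂ)
        ((1 + δ) / 2 * cantorLen q k) := by
  refine Metric.closedBall_subset_ball' ?_
  have hdist : |cantorPt q (Fin.snoc s i : Fin (k + 1) → Bool) + cantorLen q (k + 1) / 2 -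
      (cantorPt q s + cantorLen q k / 2)| ≤ (cantorLen q k - cantorLen q (k + 1)) / 2 := by
    rw [cantorPt_snoc, abs_le]
    cases i <;> constructor <;> simp only [Bool.false_eq_true, if_true, if_false] <;> linarith
  rw [Complex.isometry_ofReal.dist_eq, Real.dist_eq]
  linarith [mul_lt_mul_of_pos_left hlen hδ]

theorem pairwise_disjoint_cantorDisk_snoc (hlen : (2 + δ) * cantorLen q (k + 1) < cantorLen q k)
    (s : Fin k → Bool) :
    Pairwise (Disjoint on fun i ↦ cantorDisk q δ (Fin.snoc s i : Fin (k + 1) → Bool)) := by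
  have hleft_right : Disjoint (cantorDisk q δ (Fin.snoc s false : Fin (k + 1) → Bool))
      (cantorDisk q δ (Fin.snoc s true : Fin (k + 1) → Bool)) := by
    refine Metric.closedBall_disjoint_closedBall ?_
    rw [Complex.isometry_ofReal.dist_eq, dist_comm, Real.dist_eq]
    refine lt_of_lt_of_le ?_ (le_abs_self _)
    simp only [cantorPt_snoc, Bool.false_eq_true, if_true, if_false]
    linarith
  rintro (_ | _) (_ | _) hij
  · exact absurd rfl hij
  · exact hleft_right
  · exact hleft_right.symm
  · exact absurd rfl hij

theorem ofReal_image_cantorInterval_subset_cantorDisk (hδ : 0 ≤ δ) (hlen : 0 ≤ cantorLen q k)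
    (s : Fin k → Bool) : ((↑) : ℝ → ℂ) '' cantorInterval q s ⊆ cantorDisk q δ s := by
  rintro _ ⟨x, ⟨hleft, hright⟩, rfl⟩
  rw [cantorDisk, Metric.mem_closedBall, Complex.isometry_ofReal.dist_eq, Real.dist_eq, abs_le]
  have hmargin : 0 ≤ δ * cantorLen q k := mul_nonneg hδ hlen
  constructor <;> linarith

theorem ofReal_image_randomCantorSet_subset_iUnion_cantorDisk (hδ : 0 ≤ δ)
    (hlen : 0 ≤ cantorLen q k) :
    ((↑) : ℝ → ℂ) '' randomCantorSet q ⊆ ⋃ s : Fin k → Bool, cantorDisk q δ s :=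
  calc ((↑) : ℝ → ℂ) '' randomCantorSet q
      ⊆ (↑) '' cantorLevel q k := image_mono (iInter_subset _ k)
    _ = ⋃ s : Fin k → Bool, (↑) '' cantorInterval q s := image_iUnion
    _ ⊆ ⋃ s : Fin k → Bool, cantorDisk q δ s :=
      iUnion_mono (ofReal_image_cantorInterval_subset_cantorDisk hδ hlen)

theorem cantorDisks_disjoint_nested_circles_general (hδ : 0 < δ)
    (hq : ∀ n, δ / (2 + δ) < q n ∧ q n < 1) :
    (∀ k : ℕ, Pairwise (Disjoint on fun s : Fin k → Bool ↦ cantorDisk q δ s)) ∧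
      (∀ (k : ℕ) (s : Fin k → Bool) (i : Bool),
        cantorDisk q δ (Fin.snoc s i : Fin (k + 1) → Bool) ⊆
          Metric.ball ((cantorPt q s + cantorLen q k / 2 : ℝ) : ℂ)
            ((1 + δ) / 2 * cantorLen q k)) ∧
      Pairwise (Disjoint on fun p : Σ k : ℕ, Fin k → Bool ↦ cantorCircle q δ p.2) ∧
      (∀ (k : ℕ) (s : Fin k → Bool),
        Disjoint (cantorCircle q δ s) ((↑) '' randomCantorSet q)) := by
  have hpos := cantorLen_pos fun n ↦ (hq n).2
  have hgap (k : ℕ) : (2 + δ) * cantorLen q (k + 1) < cantorLen q k :=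
    two_add_mul_cantorLen_succ_lt (by positivity) (hpos k) (hq k).1
  have hnested (k : ℕ) := cantorDisk_snoc_subset_ball hδ
    ((le_mul_of_one_le_left (hpos (k + 1)).le (by linarith)).trans_lt (hgap k))
  have hsnoc (k : ℕ) (s : Fin k → Bool) (i : Bool) :
      cantorDisk q δ (Fin.snoc s i : Fin (k + 1) → Bool) ⊆ cantorDisk q δ s :=
    (hnested k s i).trans Metric.ball_subset_closedBall
  have hcircle (k : ℕ) (s : Fin k → Bool) : cantorCircle q δ s ⊆ cantorDisk q δ s :=
    Metric.sphere_subset_closedBall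
  have hdisks := pairwise_disjoint_of_snoc hsnoc fun k ↦ pairwise_disjoint_cantorDisk_snoc (hgap k)
  have hlevels ⦃k l : ℕ⦄ (hkl : k < l) (s : Fin k → Bool) (t : Fin l → Bool) :
      Disjoint (cantorCircle q δ s) (cantorDisk q δ t) :=
    disjoint_of_lt_of_snoc hsnoc hdisks hcircle
      (fun k s i ↦ Metric.sphere_disjoint_ball.mono_right (hnested k s i)) hkl s t
  refine ⟨hdisks, hnested, pairwise_disjoint_sigma_of_lt hdisks hcircle hlevels, fun k s ↦ ?_⟩
  exact (disjoint_iUnion_right.2 (hlevels k.lt_succ_self s)).mono_right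
    (ofReal_image_randomCantorSet_subset_iUnion_cantorDisk hδ.le (hpos (k + 1)).le)

end CantorDisk

/-- For ω with δ-lower bound: (i) for each fixed k ≥ 1 the disks D_k(s) are
pairwise disjoint; (ii) each child disk D_{k+1}(s⌢i) is contained in the open interior of
D_k(s); consequently the circles C_k(s), over all k ≥ 1 and s ∈ {0,1}^k, are pairwise
disjoint, and each circle is disjoint from E(ω) ⊂ ℝ ⊂ ℂ. -/
theorem cantorDisks_disjoint_nested_circles
    (q : ℕ → ℝ) (δ : ℝ) (hδ : 0 < δ) (hq : ∀ n, δ ≤ q n ∧ q n < 1) :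
    (∀ k : ℕ, 1 ≤ k → ∀ s t : Fin k → Bool, s ≠ t →
        Disjoint (cantorDisk q δ s) (cantorDisk q δ t)) ∧
      (∀ (k : ℕ), 1 ≤ k → ∀ (s : Fin k → Bool) (i : Bool),
        cantorDisk q δ (Fin.snoc s i) ⊆
          Metric.ball ((cantorPt q s + cantorLen q k / 2 : ℝ) : ℂ)
            ((1 + δ) / 2 * cantorLen q k)) ∧
      (∀ (k k' : ℕ) (s : Fin k → Bool) (s' : Fin k' → Bool), 1 ≤ k → 1 ≤ k' →
        (⟨k, s⟩ : Σ n : ℕ, Fin n → Bool) ≠ ⟨k', s'⟩ →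
        Disjoint (cantorCircle q δ s) (cantorCircle q δ s')) ∧
      (∀ (k : ℕ), 1 ≤ k → ∀ s : Fin k → Bool,
        Disjoint (cantorCircle q δ s) ((fun x : ℝ => (x : ℂ)) '' randomCantorSet q)) := by
  obtain ⟨hdisks, hnested, hcircles, hcantor⟩ :=
    cantorDisks_disjoint_nested_circles_general hδ fun n ↦
      ⟨(div_lt_self hδ (by linarith)).trans_le (hq n).1, (hq n).2⟩
  exact ⟨fun k _ s t hst ↦ hdisks k hst, fun k _ ↦ hnested k,
    fun k k' s s' _ _ hne ↦ @hcircles ⟨k, s⟩ ⟨k', s'⟩ hne, fun k _ ↦ hcantor k⟩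
end

section
/- Let 0 < δ < 1 and δ ≤ q̃ ≤ q < 1 be real numbers. Define r = (1/2)(1+δ)(1−q), r̂ = (1/2)(1+δ)(1−q̃) · ((1+δ) + (1−δ)q)/((1+δ) + (1−δ)q̃), and R̃ = r̂ · ((1+δ) − (1−δ)q̃)/((1+δ)(1−q̃)). Then 0 < r ≤ r̂ < R̃, and log( (log R̃ − log r) / (log R̃ − log r̂) ) ≤ ( log((1+δ²)/(1−δ²)) )^{−1} · ( log((1−q̃)/(1−q)) + (q − q̃) ). -/
/-!
The annulus `rh < |z| < Rt` is the model annulus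
`(1 + δ) * (1 - qt) / 2 < |z| < ((1 + δ) - (1 - δ) * qt) / 2` rescaled. Its ratio of radii increases
with `qt`, so it is smallest at `qt = δ`, where it equals `(1 + δ ^ 2) / (1 - δ ^ 2)`. By
`log x ≤ x - 1`, the logarithm of the dilatation is at most `log (rh / r) / log (Rt / rh)`.
The numerator splits as `log ((1 - qt) / (1 - q))` plus the logarithm of the scaling factor, and a
second use of `log x ≤ x - 1` bounds the latter by `q - qt`.
-/

section OrderedField

variable {K : Type*} [Field K] [LinearOrder K] [IsStrictOrderedRing K]

theorem one_lt_one_add_div_one_sub {x : K} (hx0 : 0 < x) (hx1 : x < 1) :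
    1 < (1 + x) / (1 - x) := by
  rw [one_lt_div (sub_pos.2 hx1)]
  linarith

theorem one_le_affine_div_affine {a b x y : K} (hb : 0 ≤ b) (hpos : 0 < a + b * x) (hxy : x ≤ y) :
    1 ≤ (a + b * y) / (a + b * x) := by
  rw [one_le_div hpos]
  gcongr

theorem affine_div_affine_sub_one_le {a b x y : K} (hpos : 0 < a + b * x) (hb : b ≤ a + b * x)
    (hxy : x ≤ y) : (a + b * y) / (a + b * x) - 1 ≤ y - x := by
  calc (a + b * y) / (a + b * x) - 1 = b * (y - x) / (a + b * x) := by
        rw [div_sub_one hpos.ne']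
        ring
    _ ≤ y - x := by
        rw [div_le_iff₀ hpos, mul_comm (y - x)]
        exact mul_le_mul_of_nonneg_right hb (sub_nonneg.2 hxy)

end OrderedField

theorem log_affine_div_affine_le {a b x y : ℝ} (hb : 0 ≤ b) (hpos : 0 < a + b * x)
    (hba : b ≤ a + b * x) (hxy : x ≤ y) : Real.log ((a + b * y) / (a + b * x)) ≤ y - x := by
  have hratio : 0 < (a + b * y) / (a + b * x) :=
    one_pos.trans_le (one_le_affine_div_affine hb hpos hxy)
  exact (Real.log_le_sub_one_of_pos hratio).trans (affine_div_affine_sub_one_le hpos hba hxy)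

theorem log_sub_div_sub_le {a b c : ℝ} (hac : a < c) (hbc : b < c) :
    Real.log ((c - a) / (c - b)) ≤ (b - a) / (c - b) := by
  have hcb : 0 < c - b := sub_pos.2 hbc
  calc Real.log ((c - a) / (c - b)) ≤ (c - a) / (c - b) - 1 :=
        Real.log_le_sub_one_of_pos (div_pos (sub_pos.2 hac) hcb)
    _ = (b - a) / (c - b) := by
        rw [div_sub_one hcb.ne', sub_sub_sub_cancel_left]

/-- The maximal dilatation of the radial quasiconformal map from the annulus `r < |z| < R` onto the
annulus `s < |z| < R` when `0 < r ≤ s < R`. -/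
noncomputable def radialDilatation (r s R : ℝ) : ℝ :=
  (Real.log R - Real.log r) / (Real.log R - Real.log s)

theorem log_radialDilatation_le {r s R M : ℝ} (hr : 0 < r) (hrs : r ≤ s) (hM : 1 < M)
    (hMR : M ≤ R / s) :
    Real.log (radialDilatation r s R) ≤ (Real.log M)⁻¹ * Real.log (s / r) := by
  have hs : 0 < s := hr.trans_le hrs
  have hsR : s < R := (one_lt_div hs).1 (hM.trans_le hMR)
  have hM_log : 0 < Real.log M := Real.log_pos hM
  have hsr_log : 0 ≤ Real.log (s / r) := Real.log_nonneg ((one_le_div hr).2 hrs)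
  calc Real.log (radialDilatation r s R)
      ≤ (Real.log s - Real.log r) / (Real.log R - Real.log s) :=
        log_sub_div_sub_le (Real.log_lt_log hr (hrs.trans_lt hsR)) (Real.log_lt_log hs hsR)
    _ = Real.log (s / r) / Real.log (R / s) := by
        rw [Real.log_div hs.ne' hr.ne', Real.log_div (hs.trans hsR).ne' hs.ne']
    _ ≤ Real.log (s / r) / Real.log M := by gcongr
    _ = (Real.log M)⁻¹ * Real.log (s / r) := div_eq_inv_mul _ _

/-- The ratio of the outer to the inner radius of the annulus with parameter `q`, that is, of
`((1 + δ) - (1 - δ) * q) / 2` to `(1 + δ) * (1 - q) / 2`. -/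
noncomputable def annulusRatio (δ q : ℝ) : ℝ :=
  ((1 + δ) - (1 - δ) * q) / ((1 + δ) * (1 - q))

theorem annulusRatio_self (δ : ℝ) : annulusRatio δ δ = (1 + δ ^ 2) / (1 - δ ^ 2) := by
  unfold annulusRatio
  congr 1 <;> ring

theorem monotoneOn_annulusRatio {δ : ℝ} (hδ : 0 ≤ δ) :
    MonotoneOn (annulusRatio δ) (Set.Iio 1) := by
  intro p hp q hq hpq
  have hp_pos : 0 < 1 - p := sub_pos.2 hp
  have hq_pos : 0 < 1 - q := sub_pos.2 hq
  unfold annulusRatio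
  rw [div_le_div_iff₀ (by positivity) (by positivity), ← sub_nonneg]
  calc 0 ≤ (1 + δ) * (2 * δ * (q - p)) :=
        mul_nonneg (by positivity) (mul_nonneg (by positivity) (sub_nonneg.2 hpq))
    _ = ((1 + δ) - (1 - δ) * q) * ((1 + δ) * (1 - p)) -
        ((1 + δ) - (1 - δ) * p) * ((1 + δ) * (1 - q)) := by ring

/-- With 0 < δ < 1, δ ≤ q̃ ≤ q < 1 and
r = (1/2)(1+δ)(1−q),
r̂ = (1/2)(1+δ)(1−q̃)·((1+δ)+(1−δ)q)/((1+δ)+(1−δ)q̃),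
R̃ = r̂·((1+δ)−(1−δ)q̃)/((1+δ)(1−q̃)),
one has 0 < r ≤ r̂ < R̃ and
log((log R̃ − log r)/(log R̃ − log r̂)) ≤
  (log((1+δ²)/(1−δ²)))⁻¹ · (log((1−q̃)/(1−q)) + (q − q̃)). -/
theorem dilatation_estimate_step5
    (δ q qt r rh Rt : ℝ) (hδ0 : 0 < δ) (hδ1 : δ < 1)
    (h0 : δ ≤ qt) (h1 : qt ≤ q) (h2 : q < 1)
    (hr : r = 1 / 2 * (1 + δ) * (1 - q))
    (hrh : rh = 1 / 2 * (1 + δ) * (1 - qt) * (((1 + δ) + (1 - δ) * q) / ((1 + δ) + (1 - δ) * qt)))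
    (hRt : Rt = rh * (((1 + δ) - (1 - δ) * qt) / ((1 + δ) * (1 - qt)))) :
    0 < r ∧ r ≤ rh ∧ rh < Rt ∧
      Real.log ((Real.log Rt - Real.log r) / (Real.log Rt - Real.log rh)) ≤
        (Real.log ((1 + δ ^ 2) / (1 - δ ^ 2)))⁻¹ *
          (Real.log ((1 - qt) / (1 - q)) + (q - qt)) := by
  have hδ_sub : 0 < 1 - δ := sub_pos.2 hδ1
  have hq_sub : 0 < 1 - q := sub_pos.2 h2
  have hqt_sub : 0 < 1 - qt := sub_pos.2 (h1.trans_lt h2)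
  have hden : 1 - δ ≤ (1 + δ) + (1 - δ) * qt := by nlinarith
  have hden_pos := hδ_sub.trans_le hden
  have hscale_log := log_affine_div_affine_le hδ_sub.le hden_pos hden h1
  have hscale := one_le_affine_div_affine hδ_sub.le hden_pos h1
  generalize ((1 + δ) + (1 - δ) * q) / ((1 + δ) + (1 - δ) * qt) = scale at hrh hscale hscale_log
  have hr_pos : 0 < r := by rw [hr]; positivity
  have hle : r ≤ rh := by
    rw [hr, hrh, mul_assoc _ (1 - qt)]
    gcongr
    exact (sub_le_sub_left h1 1).trans (le_mul_of_one_le_right hqt_sub.le hscale)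
  have hrh_div : rh / r = (1 - qt) / (1 - q) * scale := by rw [hr, hrh]; field_simp
  have hrh_pos : 0 < rh := hr_pos.trans_le hle
  have hM : 1 < (1 + δ ^ 2) / (1 - δ ^ 2) :=
    one_lt_one_add_div_one_sub (by positivity) (pow_lt_one₀ hδ0.le hδ1 two_ne_zero)
  have hMR : (1 + δ ^ 2) / (1 - δ ^ 2) ≤ Rt / rh := by
    rw [hRt, mul_div_cancel_left₀ _ hrh_pos.ne', ← annulusRatio_self]
    exact monotoneOn_annulusRatio hδ0.le hδ1 (h1.trans_lt h2) h0
  refine ⟨hr_pos, hle, (one_lt_div hrh_pos).1 (hM.trans_le hMR),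
    (log_radialDilatation_le hr_pos hle hM hMR).trans ?_⟩
  have hM_log : 0 < Real.log ((1 + δ ^ 2) / (1 - δ ^ 2)) := Real.log_pos hM
  rw [hrh_div, Real.log_mul (by positivity) (by positivity)]
  gcongr
end
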